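/- Assume n ≥ 1 and gcd(d_0,…,d_n) = 1. Let λ ∈ K be such that either λ is not in the image of the canonical map ℤ → K, or λ is the image of an element of 𝒜. If M is a nonzero torsion-free λ-Euler graded D-module, then M_0 ≠ 0. (Equivalently: any torsion-free λ-Euler graded D-module with M_0 = 0 is zero, so the kernel of the global sections functor Γ_λ on twisted D-modules on the weighted projective stack with weights d_0,…,d_n is the zero category.) -/

import Mathlib

/-!
Context: `K` is a field of characteristic zero, `n ≥ 0`, and `d 0, …, d n` are
positive integers.  `A = K[x_0, …, x_n]` is the polynomial ring, graded with
`x i` of weighted degree `d i`.  Inside `End_K(A)` we have the multiplication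
operators `x i`, the partial derivatives `∂ i`, the Weyl algebra `D` generated
by them, and the Euler field `E = Σ_i d_i x_i ∂_i`.
-/

open MvPolynomial Finset

set_option linter.unusedSectionVars false
set_option synthInstance.maxHeartbeats 1000000
set_option maxHeartbeats 2000000

noncomputable section

variable (K : Type) [Field K] [CharZero K] (n : ℕ)

/-- The polynomial ring `A = K[x_0, …, x_n]`. -/
abbrev Amb := MvPolynomial (Fin (n+1)) K

/-- The operator of multiplication by `x_i` on `A`. -/
def xOp (i : Fin (n+1)) : Module.End K (Amb K n) := LinearMap.mulLeft K (X i)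

/-- The partial derivative `∂/∂x_i` on `A`. -/
def dOp (i : Fin (n+1)) : Module.End K (Amb K n) := (pderiv i).toLinearMap

/-- The Weyl algebra `D`: the `K`-subalgebra of `End_K(A)` generated by
`x_0, …, x_n, ∂_0, …, ∂_n`. -/
def Weyl : Subalgebra K (Module.End K (Amb K n)) :=
  Algebra.adjoin K (Set.range (xOp K n) ∪ Set.range (dOp K n))

variable (d : Fin (n+1) → ℕ)

/-- The Euler field `E = Σ_i d_i x_i ∂_i`, as an endomorphism of `A`. -/
def euler : Module.End K (Amb K n) := ∑ i, (d i : K) • (xOp K n i * dOp K n i)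

lemma xOp_mem (i : Fin (n+1)) : xOp K n i ∈ Weyl K n :=
  Algebra.subset_adjoin (Or.inl ⟨i, rfl⟩)

lemma dOp_mem (i : Fin (n+1)) : dOp K n i ∈ Weyl K n :=
  Algebra.subset_adjoin (Or.inr ⟨i, rfl⟩)

lemma euler_mem : euler K n d ∈ Weyl K n :=
  Subalgebra.sum_mem _ fun i _ => Subalgebra.smul_mem _
    (Subalgebra.mul_mem _ (xOp_mem K n i) (dOp_mem K n i)) _

/-- `x_i` as an element of the Weyl algebra. -/
def xElt (i : Fin (n+1)) : Weyl K n := ⟨xOp K n i, xOp_mem K n i⟩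

/-- `∂_i` as an element of the Weyl algebra. -/
def dElt (i : Fin (n+1)) : Weyl K n := ⟨dOp K n i, dOp_mem K n i⟩

/-- The Euler field as an element of the Weyl algebra. -/
def eulerElt : Weyl K n := ⟨euler K n d, euler_mem K n d⟩

section CanonicalCommutation

variable {K : Type} [Field K] [CharZero K] {M : Type} [AddCommGroup M] [Module K M]

/-- If `P X = X P + 1` and `P m = 0`, then `P X^(p+1) m = (p+1) X^p m`. -/
lemma lowering_pow_succ_apply {P X : Module.End K M} (h : P * X = X * P + 1) {m : M}
    (hm : P m = 0) (p : ℕ) : P ((X ^ (p + 1)) m) = ((p : K) + 1) • (X ^ p) m := by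
  have h' : ∀ v, P (X v) = X (P v) + v := fun v => by
    simpa using LinearMap.congr_fun h v
  induction p with
  | zero => simp [h', hm]
  | succ p ih =>
    rw [pow_succ', Module.End.mul_apply, h', ih, map_smul, ← Module.End.mul_apply,
      ← pow_succ']
    push_cast
    module

/-- If `P X = X P + 1`, powers of `X` are injective on the kernel of `P`. -/
lemma eq_zero_of_raising_pow_eq_zero {P X : Module.End K M} (h : P * X = X * P + 1) {m : M}
    (hm : P m = 0) (p : ℕ) (hp : (X ^ p) m = 0) : m = 0 := by
  induction p with
  | zero => simpa using hp
  | succ p ih =>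
    have h1 := lowering_pow_succ_apply h hm p
    rw [hp, map_zero] at h1
    exact ih ((smul_eq_zero.mp h1.symm).resolve_left (by exact_mod_cast Nat.succ_ne_zero p))

/-- The `p`-th power of a graded operator of degree `e` is graded of degree `p e`. -/
lemma pow_apply_mem_graded {Mgr : ℤ → Submodule K M} {T : Module.End K M} {e : ℤ}
    (hT : ∀ k, ∀ m ∈ Mgr k, T m ∈ Mgr (k + e)) (p : ℕ) {k : ℤ} {m : M} (hm : m ∈ Mgr k) :
    (T ^ p) m ∈ Mgr (k + p * e) := by
  induction p with
  | zero => simpa using hm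
  | succ p ih =>
    rw [pow_succ', Module.End.mul_apply]
    convert hT _ _ ih using 2
    push_cast
    ring

variable {ι : Type} {Mgr : ℤ → Submodule K M} {e : ι → ℤ}

/-- Commuting graded operators that are nilpotent on a nonzero homogeneous vector
have a common nonzero homogeneous kernel vector. -/
lemma exists_homogeneous_common_kernel {P : ι → Module.End K M}
    (hcomm : ∀ i j, Commute (P i) (P j)) (hP : ∀ i k, ∀ m ∈ Mgr k, P i m ∈ Mgr (k + e i))
    {k : ℤ} {m : M} (hm : m ∈ Mgr k) (hm0 : m ≠ 0) (hnil : ∀ i, ∃ N : ℕ, (P i ^ N) m = 0)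
    (s : Finset ι) :
    ∃ k', ∃ v ∈ Mgr k', v ≠ 0 ∧ (∀ i ∈ s, P i v = 0) ∧ ∀ i, ∃ N : ℕ, (P i ^ N) v = 0 := by
  classical
  induction s using Finset.induction_on with
  | empty => exact ⟨k, m, hm, hm0, by simp, hnil⟩
  | insert i s _ ih =>
    obtain ⟨k', v, hv, hv0, hs, hN⟩ := ih
    have hswap : ∀ (j : ι) (a b : ℕ), (P j ^ a) ((P i ^ b) v) = (P i ^ b) ((P j ^ a) v) :=
      fun j a b => LinearMap.congr_fun ((hcomm j i).pow_pow a b).eq v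
    obtain ⟨p, hp⟩ : ∃ p, Nat.find (hN i) = p + 1 :=
      Nat.exists_eq_succ_of_ne_zero fun h0 => hv0 (by simpa [h0] using Nat.find_spec (hN i))
    refine ⟨_, (P i ^ p) v, pow_apply_mem_graded (hP i) p hv,
      Nat.find_min (hN i) (by omega), ?_, fun j => ?_⟩
    · intro j hj
      rcases Finset.mem_insert.mp hj with rfl | hj
      · rw [← Module.End.mul_apply, ← pow_succ', ← hp]
        exact Nat.find_spec (hN j)
      · simpa [hs j hj] using hswap j 1 p
    · obtain ⟨N, h⟩ := hN j
      exact ⟨N, by rw [hswap, h, map_zero]⟩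

/-- Starting from a nonzero homogeneous vector killed by all lowering operators, the monomials
in the raising operators produce nonzero vectors in all degrees `k + ∑ b i * e i`. -/
lemma exists_homogeneous_raised {X P : ι → Module.End K M}
    (hPX : ∀ i, P i * X i = X i * P i + 1) (hPX' : ∀ i j, i ≠ j → Commute (P i) (X j))
    (hX : ∀ i k, ∀ m ∈ Mgr k, X i m ∈ Mgr (k + e i)) {k : ℤ} {m : M} (hm : m ∈ Mgr k)
    (hm0 : m ≠ 0) (hker : ∀ i, P i m = 0) (b : ι → ℕ) (s : Finset ι) :
    ∃ v ∈ Mgr (k + ∑ i ∈ s, b i * e i), v ≠ 0 ∧ ∀ i ∉ s, P i v = 0 := by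
  classical
  induction s using Finset.induction_on with
  | empty => exact ⟨m, by simpa using hm, hm0, fun i _ => hker i⟩
  | insert i s his ih =>
    obtain ⟨v, hv, hv0, hs⟩ := ih
    refine ⟨(X i ^ b i) v, ?_, fun h => hv0 (eq_zero_of_raising_pow_eq_zero (hPX i) (hs i his) _ h),
      fun j hj => ?_⟩
    · rw [Finset.sum_insert his, add_comm (_ * _), ← add_assoc]
      exact pow_apply_mem_graded (hX i) _ hv
    · rw [Finset.mem_insert, not_or] at hj
      have h := LinearMap.congr_fun ((hPX' j i hj.1).pow_right (b i)).eq v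
      simpa [hs j hj.2] using h

/-- If a graded module over the canonical commutation relation vanishes in all degrees congruent
to `r` modulo `a * (q + 1)`, then it vanishes in all degrees congruent to `r + a`. -/
lemma graded_eq_bot_add {X P : Module.End K M} (h : P * X = X * P + 1) {a : ℤ}
    (hX : ∀ k, ∀ m ∈ Mgr k, X m ∈ Mgr (k + a)) (hP : ∀ k, ∀ m ∈ Mgr k, P m ∈ Mgr (k + -a))
    {L : ℤ} {q : ℕ} (hL : L = a * (q + 1)) {r : ℤ} (hr : ∀ z : ℤ, Mgr (r + L * z) = ⊥) (z : ℤ) :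
    Mgr (r + a + L * z) = ⊥ := by
  rw [Submodule.eq_bot_iff]
  intro m hm
  have h1 : P m = 0 := by
    have := hP _ _ hm
    rwa [show r + a + L * z + -a = r + L * z by ring, hr, Submodule.mem_bot] at this
  have h2 : (X ^ q) m = 0 := by
    have := pow_apply_mem_graded hX q hm
    rwa [show r + a + L * z + q * a = r + L * (z + 1) by rw [hL]; ring, hr,
      Submodule.mem_bot] at this
  exact eq_zero_of_raising_pow_eq_zero h h1 q h2

end CanonicalCommutation

lemma dElt_mul_xElt_self (i : Fin (n+1)) :
    dElt K n i * xElt K n i = xElt K n i * dElt K n i + 1 := by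
  apply Subtype.ext
  refine LinearMap.ext fun f => ?_
  simp [dElt, xElt, dOp, xOp, mul_comm, add_comm]

lemma commute_dElt_xElt {i j : Fin (n+1)} (hij : i ≠ j) :
    Commute (dElt K n i) (xElt K n j) := by
  apply Subtype.ext
  refine LinearMap.ext fun f => ?_
  simp [dElt, xElt, dOp, xOp, pderiv_X_of_ne hij.symm]

lemma commute_dElt (i j : Fin (n+1)) : Commute (dElt K n i) (dElt K n j) := by
  apply Subtype.ext
  refine LinearMap.ext fun f => ?_
  have h : ⁅pderiv (R := K) i, pderiv (R := K) j⁆ = 0 := by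
    apply MvPolynomial.derivation_ext
    intro l
    simp [Derivation.commutator_apply, pderiv_X, Pi.single_apply, apply_ite]
  have h' := Derivation.congr_fun h f
  simpa [Derivation.commutator_apply, sub_eq_zero, dElt, dOp] using h'

lemma eulerElt_eq_sum :
    eulerElt K n d = ∑ i, (d i : K) • (xElt K n i * dElt K n i) := by
  apply Subtype.ext
  simp [eulerElt, euler, xElt, dElt]

/-- Translation-invariance of a predicate on `ℤ` under integers of gcd one. -/
lemma forall_of_add_of_gcd_eq_one {ι : Type} {s : Finset ι} {d : ι → ℕ} (hgcd : s.gcd d = 1)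
    {Z : ℤ → Prop} (h0 : Z 0) (hadd : ∀ i ∈ s, ∀ r, Z r ↔ Z (r + d i)) (r : ℤ) : Z r := by
  let H : AddSubgroup ℤ :=
    { carrier := {h | ∀ r, Z r ↔ Z (r + h)}
      zero_mem' := by simp
      add_mem' := fun {a b} ha hb r => by rw [ha r, hb (r + a), add_assoc]
      neg_mem' := fun {a} ha r => by rw [ha (r + -a), neg_add_cancel_right] }
  obtain ⟨g, hg⟩ := Int.subgroup_cyclic H
  rw [← AddSubgroup.zmultiples_eq_closure] at hg
  have hdvd : g.natAbs ∣ s.gcd d := Finset.dvd_gcd fun i hi => by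
    have hi' : (d i : ℤ) ∈ H := hadd i hi
    rw [hg, Int.mem_zmultiples_iff] at hi'
    exact Int.natCast_dvd_natCast.mp (Int.natAbs_dvd.mpr hi')
  have hr : r ∈ H := by
    rw [hg, Int.mem_zmultiples_iff]
    rw [hgcd, Nat.dvd_one] at hdvd
    exact (Int.isUnit_iff_natAbs_eq.mpr hdvd).dvd
  simpa using (hr 0).mp h0

/-- Assume `n ≥ 1` and `gcd(d_0,…,d_n) = 1`.  Let `λ ∈ K` be either not in
the image of `ℤ → K`, or the image of an element of the submonoid `𝒜 ⊆ ℕ` generated by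
`d_0, …, d_n`.  If `M` is a nonzero torsion-free `λ`-Euler graded `D`-module, then
`M_0 ≠ 0` (so the kernel of the global sections functor `Γ_λ` on twisted `D`-modules on
the weighted projective stack with weights `d_0, …, d_n` is the zero category). -/
theorem stmt15 (hn : 1 ≤ n) (hd : ∀ i, 0 < d i)
    (hgcd : Finset.univ.gcd d = 1) (t : K)
    (ht : (∀ z : ℤ, t ≠ (z : K)) ∨ ∃ b : Fin (n+1) → ℕ, t = ((∑ i, b i * d i : ℕ) : K))
    {M : Type} [AddCommGroup M] [Module K M]
    (ρ : Weyl K n →ₐ[K] Module.End K M)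
    (Mgr : ℤ → Submodule K M)
    (hdirect : DirectSum.IsInternal Mgr)
    (hgx : ∀ (i : Fin (n+1)) (k : ℤ), ∀ m ∈ Mgr k, ρ (xElt K n i) m ∈ Mgr (k + d i))
    (hgd : ∀ (i : Fin (n+1)) (k : ℤ), ∀ m ∈ Mgr k, ρ (dElt K n i) m ∈ Mgr (k - d i))
    (hgE : ∀ (k : ℤ), ∀ m ∈ Mgr k, ρ (eulerElt K n d) m = (t + (k : K)) • m)
    (htf : ∀ m : M, (∃ c : ℕ, ∀ i : Fin (n+1), (ρ (xElt K n i) ^ c) m = 0) → m = 0)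
    (hM : ∃ m : M, m ≠ 0) :
    Mgr 0 ≠ ⊥ := by
  intro hM0
  have hPX i : ρ (dElt K n i) * ρ (xElt K n i) = ρ (xElt K n i) * ρ (dElt K n i) + 1 := by
    rw [← map_mul, dElt_mul_xElt_self, map_add, map_mul, map_one]
  have hP : ∀ i k, ∀ m ∈ Mgr k, ρ (dElt K n i) m ∈ Mgr (k + -(d i : ℤ)) := hgd
  have hq i : ∃ q : ℕ, ∏ j, d j = d i * (q + 1) := by
    obtain ⟨c, hc⟩ := Finset.dvd_prod_of_mem d (Finset.mem_univ i)
    have hc0 : c ≠ 0 := by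
      rintro rfl
      exact (Finset.prod_pos fun j _ => hd j).ne' (by simpa using hc)
    obtain ⟨q, rfl⟩ := Nat.exists_eq_succ_of_ne_zero hc0
    exact ⟨q, hc⟩
  choose q hq using hq
  set L : ℕ := ∏ j, d j
  have hLq i : (L : ℤ) = d i * ((q i : ℤ) + 1) := by exact_mod_cast hq i
  have hneg (N : ℕ) : Mgr (-(L * N)) = ⊥ := by
    rw [Submodule.eq_bot_iff]
    intro m hm
    refine htf m ⟨L * N, fun i => ?_⟩
    have h := pow_apply_mem_graded (hgx i) ((q i + 1) * N) hm
    rw [show -((L : ℤ) * N) + ((q i + 1) * N : ℕ) * (d i : ℤ) = 0 by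
      rw [hLq i]; push_cast; ring, hM0, Submodule.mem_bot] at h
    refine Module.End.pow_map_zero_of_le ?_ h
    rw [hq i]
    exact Nat.mul_le_mul_right _ (Nat.le_mul_of_pos_left _ (hd i))
  have hpos (N : ℕ) : Mgr (L * N) = ⊥ := by
    rw [Submodule.eq_bot_iff]
    intro m hm
    by_contra hm0
    have hnil i : ∃ N : ℕ, (ρ (dElt K n i) ^ N) m = 0 := by
      refine ⟨(q i + 1) * N, ?_⟩
      have h := pow_apply_mem_graded (hP i) ((q i + 1) * N) hm
      rwa [show (L : ℤ) * N + ((q i + 1) * N : ℕ) * -(d i : ℤ) = 0 by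
        rw [hLq i]; push_cast; ring, hM0, Submodule.mem_bot] at h
    obtain ⟨k, v, hv, hv0, hker, -⟩ := exists_homogeneous_common_kernel
      (fun i j => (commute_dElt K n i j).map ρ) hP hm hm0 hnil Finset.univ
    have hE := hgE k v hv
    rw [eulerElt_eq_sum, map_sum, LinearMap.sum_apply, Finset.sum_eq_zero fun i _ => by
      simp [hker i (Finset.mem_univ i)]] at hE
    have htk : t = ((-k : ℤ) : K) := by
      rw [Int.cast_neg]
      exact eq_neg_of_add_eq_zero_left ((smul_eq_zero.mp hE.symm).resolve_right hv0)
    rcases ht with ht | ⟨b, hb⟩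
    · exact ht _ htk
    · obtain ⟨w, hw, hw0, -⟩ := exists_homogeneous_raised hPX
        (fun i j hij => (commute_dElt_xElt K n hij).map ρ) hgx hv hv0
        (fun i => hker i (Finset.mem_univ i)) b Finset.univ
      have hkb : -k = ((∑ i, b i * d i : ℕ) : ℤ) := by
        have := htk.symm.trans hb
        exact_mod_cast this
      push_cast at hkb
      rw [← hkb, add_neg_cancel, hM0, Submodule.mem_bot] at hw
      exact hw0 hw
  have hzero (z : ℤ) : Mgr (0 + L * z) = ⊥ := by
    rw [zero_add]
    obtain ⟨N, rfl | rfl⟩ := Int.eq_nat_or_neg z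
    · exact hpos N
    · rw [mul_neg]; exact hneg N
  have hadd i r (hr : ∀ z : ℤ, Mgr (r + L * z) = ⊥) (z : ℤ) : Mgr (r + d i + L * z) = ⊥ :=
    graded_eq_bot_add (hPX i) (hgx i) (hP i) (hLq i) hr z
  have hiter i r (hr : ∀ z : ℤ, Mgr (r + L * z) = ⊥) (p : ℕ) (z : ℤ) :
      Mgr (r + p * d i + L * z) = ⊥ := by
    induction p generalizing z with
    | zero => simpa using hr z
    | succ p ih =>
      convert hadd i _ ih z using 2
      push_cast
      ring
  have hall (r : ℤ) : ∀ z : ℤ, Mgr (r + L * z) = ⊥ := by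
    refine forall_of_add_of_gcd_eq_one hgcd (Z := fun r => ∀ z : ℤ, Mgr (r + L * z) = ⊥) hzero
      (fun i _ r => ⟨hadd i r, fun hr z => ?_⟩) r
    convert hiter i _ hr (q i) (z - 1) using 2
    rw [hLq i]
    ring
  obtain ⟨m, hm⟩ := hM
  have hbot : (⊤ : Submodule K M) = ⊥ := by
    rw [← hdirect.submodule_iSup_eq_top, iSup_eq_bot]
    exact fun k => by simpa using hall k 0
  exact hm ((Submodule.mem_bot K).mp (hbot ▸ Submodule.mem_top))

end
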